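/- arXiv:2205.00982 — 2 statements merged into one kernel-verified Lean document; each statement's English description precedes it below -/
import Mathlib

section
/- Almost no subset of {0, 1, …, N} is a genuine sumset: there exist constants c > 0 and K > 0 such that for all N ∈ ℕ, the number of sets A ⊆ {0, 1, …, N} for which there exist B, C ⊆ {0, 1, …, N} with |B| ≥ 2, |C| ≥ 2 and A = B + C (sumset) is at most K · 2^N · exp(−cN). -/
open Pointwise

theorem Finset.card_filter_lt_card_le (n m : ℕ) :
    (((Finset.range n).powerset.filter (fun A => m < A.card)).card : ℝ) * 2 ^ (m + 1) ≤ 3 ^ n := by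
  calc (((Finset.range n).powerset.filter (fun A => m < A.card)).card : ℝ) * 2 ^ (m + 1)
      = ∑ A ∈ (Finset.range n).powerset.filter (fun A => m < A.card), (2 : ℝ) ^ (m + 1) := by
        simp
    _ ≤ ∑ A ∈ (Finset.range n).powerset.filter (fun A => m < A.card), (2 : ℝ) ^ A.card := by
        refine Finset.sum_le_sum fun A hA => ?_
        exact pow_le_pow_right₀ one_le_two (Finset.mem_filter.1 hA).2
    _ ≤ ∑ A ∈ (Finset.range n).powerset, (2 : ℝ) ^ A.card :=
        Finset.sum_le_sum_of_subset_of_nonneg (Finset.filter_subset _ _)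
          fun _ _ _ => by positivity
    _ = 3 ^ n := by
        have h := Finset.prod_one_add (f := fun _ : ℕ => (2 : ℝ)) (Finset.range n)
        simp only [Finset.prod_const, Finset.card_range] at h
        rw [← h]
        norm_num

/-- The number of pairs `(B, C)` of subsets of `S` and `T` such that no `j ∈ J` has
`j ∈ B` and `f j ∈ C`, for `f` injective from `J ⊆ S` to `T`. -/
theorem Finset.card_filter_pairs_avoiding_le {S T J : Finset ℕ} {f : ℕ → ℕ} (hJ : J ⊆ S)
    (hf : Set.InjOn f J) (hT : ∀ j ∈ J, f j ∈ T) :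
    (((S.powerset ×ˢ T.powerset).filter
        (fun p => ∀ j ∈ J, j ∈ p.1 → f j ∉ p.2)).card : ℝ) ≤
      2 ^ S.card * 2 ^ T.card * (3 / 4) ^ J.card := by
  have hB : ∀ B ∈ S.powerset,
      ((T.powerset.filter (fun C => ∀ j ∈ J, j ∈ B → f j ∉ C)).card : ℝ) ≤
        2 ^ T.card * ∏ j ∈ B, if j ∈ J then (1 / 2 : ℝ) else 1 := by
    intro B _
    have hsub : (B.filter (· ∈ J)).image f ⊆ T := by
      intro y hy
      obtain ⟨j, hj, rfl⟩ := Finset.mem_image.1 hy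
      exact hT j (Finset.mem_filter.1 hj).2
    have hcard : ((B.filter (· ∈ J)).image f).card = (B.filter (· ∈ J)).card :=
      Finset.card_image_of_injOn fun a ha b hb h =>
        hf (by simpa using (Finset.mem_filter.1 ha).2) (by simpa using (Finset.mem_filter.1 hb).2) h
    have hle : (T.powerset.filter (fun C => ∀ j ∈ J, j ∈ B → f j ∉ C)) ⊆
        (T \ (B.filter (· ∈ J)).image f).powerset := by
      intro C hC
      simp only [Finset.mem_filter, Finset.mem_powerset] at hC ⊢
      intro c hc
      simp only [Finset.mem_sdiff, Finset.mem_image, Finset.mem_filter, not_exists, not_and]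
      refine ⟨hC.1 hc, ?_⟩
      rintro j ⟨hjB, hjJ⟩ rfl
      exact hC.2 j hjJ hjB hc
    have h1 := Finset.card_le_card hle
    rw [Finset.card_powerset, Finset.card_sdiff_of_subset hsub, hcard] at h1
    have h2 : (B.filter (· ∈ J)).card ≤ T.card := hcard ▸ Finset.card_le_card hsub
    rw [Finset.prod_ite, Finset.prod_const, Finset.prod_const_one, mul_one]
    calc _ ≤ (2 : ℝ) ^ (T.card - (B.filter (· ∈ J)).card) := by exact_mod_cast h1
      _ = _ := by
        rw [pow_sub₀ _ two_ne_zero h2, one_div, inv_pow]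
  calc (((S.powerset ×ˢ T.powerset).filter
        (fun p => ∀ j ∈ J, j ∈ p.1 → f j ∉ p.2)).card : ℝ)
      = ∑ B ∈ S.powerset,
          ((T.powerset.filter (fun C => ∀ j ∈ J, j ∈ B → f j ∉ C)).card : ℝ) := by
        simp only [Finset.card_filter, Finset.sum_product, Nat.cast_sum]
    _ ≤ ∑ B ∈ S.powerset, 2 ^ T.card * ∏ j ∈ B, (if j ∈ J then (1 / 2 : ℝ) else 1) :=
        Finset.sum_le_sum hB
    _ = 2 ^ T.card * ∏ j ∈ S, (1 + if j ∈ J then (1 / 2 : ℝ) else 1) := by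
        rw [← Finset.mul_sum, Finset.prod_one_add]
    _ = 2 ^ T.card * ((∏ j ∈ S, (2 : ℝ)) * ∏ j ∈ S, if j ∈ J then (3 / 4 : ℝ) else 1) := by
        rw [← Finset.prod_mul_distrib]
        congr 1
        refine Finset.prod_congr rfl fun j _ => ?_
        split_ifs <;> norm_num
    _ = _ := by
        rw [Finset.prod_ite_mem, Finset.inter_eq_right.2 hJ]
        simp only [Finset.prod_const]
        ring

/-- A transfer-matrix weight bounding from above `2 ^ (-|B ∪ (B + d)|)`. -/
noncomputable def shiftWeight (d n : ℕ) (B : Finset ℕ) : ℝ :=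
  (∏ i ∈ Finset.range n, if i ∈ B ∨ (d ≤ i ∧ i - d ∈ B) then (1 / 2 : ℝ) else 1) *
    ∏ i ∈ Finset.Ico n (n + d), if d ≤ i ∧ i - d ∈ B then (1 : ℝ) else 8 / 5

theorem shiftWeight_add_shiftWeight_insert_le {d n : ℕ} (hd : 0 < d) {B : Finset ℕ}
    (hB : B ⊆ Finset.range n) :
    shiftWeight d (n + 1) B + shiftWeight d (n + 1) (insert n B) ≤
      21 / 16 * shiftWeight d n B := by
  have hn : n ∉ B := fun h => by simpa using hB h
  have hins : ∀ i, i < n + d → ((d ≤ i ∧ i - d ∈ insert n B) ↔ (d ≤ i ∧ i - d ∈ B)) := by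
    intro i hi
    rw [Finset.mem_insert]
    exact and_congr_right fun h => or_iff_right (by omega)
  have h1 : ∏ i ∈ Finset.range n,
      (if i ∈ insert n B ∨ (d ≤ i ∧ i - d ∈ insert n B) then (1 / 2 : ℝ) else 1) =
      ∏ i ∈ Finset.range n, (if i ∈ B ∨ (d ≤ i ∧ i - d ∈ B) then (1 / 2 : ℝ) else 1) := by
    refine Finset.prod_congr rfl fun i hi => ?_
    have := Finset.mem_range.1 hi
    have hi' : i ∈ insert n B ↔ i ∈ B := by
      simp only [Finset.mem_insert, this.ne, false_or]
    simp only [hi', hins i (by omega)]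
  have h2 : ∏ i ∈ Finset.Ico (n + 1) (n + d),
      (if d ≤ i ∧ i - d ∈ insert n B then (1 : ℝ) else 8 / 5) =
      ∏ i ∈ Finset.Ico (n + 1) (n + d), (if d ≤ i ∧ i - d ∈ B then (1 : ℝ) else 8 / 5) := by
    refine Finset.prod_congr rfl fun i hi => ?_
    simp only [hins i (Finset.mem_Ico.1 hi).2]
  unfold shiftWeight
  rw [show n + 1 + d = n + d + 1 by ring, Finset.prod_Ico_succ_top (by omega),
    Finset.prod_Ico_succ_top (by omega), Finset.prod_range_succ, Finset.prod_range_succ,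
    h1, h2, Finset.prod_eq_prod_Ico_succ_bot (show n < n + d by omega)]
  have hP : 0 ≤ ∏ i ∈ Finset.range n,
      (if i ∈ B ∨ (d ≤ i ∧ i - d ∈ B) then (1 / 2 : ℝ) else 1) :=
    Finset.prod_nonneg fun _ _ => by split_ifs <;> norm_num
  have hQ : 0 ≤ ∏ i ∈ Finset.Ico (n + 1) (n + d),
      (if d ≤ i ∧ i - d ∈ B then (1 : ℝ) else 8 / 5) :=
    Finset.prod_nonneg fun _ _ => by split_ifs <;> norm_num
  have hPQ := mul_nonneg hP hQ
  generalize (∏ i ∈ Finset.range n,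
      (if i ∈ B ∨ (d ≤ i ∧ i - d ∈ B) then (1 / 2 : ℝ) else 1)) = P at *
  generalize (∏ i ∈ Finset.Ico (n + 1) (n + d),
      (if d ≤ i ∧ i - d ∈ B then (1 : ℝ) else 8 / 5)) = Q at *
  simp only [hn, Nat.add_sub_cancel, le_add_iff_nonneg_left, zero_le, true_and, false_or,
    if_false, Finset.mem_insert_self, true_or, if_true]
  split_ifs <;> nlinarith

theorem sum_shiftWeight_le {d : ℕ} (hd : 0 < d) (n : ℕ) :
    ∑ B ∈ (Finset.range n).powerset, shiftWeight d n B ≤ (21 / 16) ^ n * (8 / 5) ^ d := by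
  induction n with
  | zero =>
    simp only [Finset.range_zero, Finset.powerset_empty, Finset.sum_singleton, shiftWeight,
      Finset.prod_empty, Finset.notMem_empty, and_false, if_false, Finset.prod_const]
    simp
  | succ n ih =>
    rw [Finset.range_add_one, Finset.sum_powerset_insert Finset.notMem_range_self,
      ← Finset.sum_add_distrib]
    calc _ ≤ ∑ B ∈ (Finset.range n).powerset, 21 / 16 * shiftWeight d n B :=
          Finset.sum_le_sum fun B hB =>
            shiftWeight_add_shiftWeight_insert_le hd (Finset.mem_powerset.1 hB)
      _ ≤ 21 / 16 * ((21 / 16) ^ n * (8 / 5) ^ d) := by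
          rw [← Finset.mul_sum]
          gcongr
      _ = _ := by ring

theorem half_pow_card_le_shiftWeight {d n m : ℕ} {B : Finset ℕ}
    (hm : (B ∪ B.image (· + d)).card ≤ m) : (1 / 2 : ℝ) ^ m ≤ shiftWeight d n B := by
  have hsub : (Finset.range n).filter (fun i => i ∈ B ∨ (d ≤ i ∧ i - d ∈ B)) ⊆
      B ∪ B.image (· + d) := by
    intro i hi
    rw [Finset.mem_union, Finset.mem_image]
    exact (Finset.mem_filter.1 hi).2.imp_right fun h => ⟨i - d, h.2, Nat.sub_add_cancel h.1⟩
  have h1 : (1 / 2 : ℝ) ^ m ≤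
      ∏ i ∈ Finset.range n, if i ∈ B ∨ (d ≤ i ∧ i - d ∈ B) then (1 / 2 : ℝ) else 1 := by
    rw [Finset.prod_ite, Finset.prod_const, Finset.prod_const_one, mul_one]
    exact pow_le_pow_of_le_one (by norm_num) (by norm_num)
      ((Finset.card_le_card hsub).trans hm)
  have h2 : (1 : ℝ) ≤
      ∏ i ∈ Finset.Ico n (n + d), if d ≤ i ∧ i - d ∈ B then (1 : ℝ) else 8 / 5 := by
    rw [Finset.prod_ite, Finset.prod_const_one, one_mul, Finset.prod_const]
    exact one_le_pow₀ (by norm_num)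
  exact h1.trans (le_mul_of_one_le_right ((by positivity : (0 : ℝ) ≤ _).trans h1) h2)

theorem card_filter_card_union_shift_le {d : ℕ} (hd : 0 < d) (n m : ℕ) :
    (((Finset.range n).powerset.filter
        (fun B => (B ∪ B.image (· + d)).card ≤ m)).card : ℝ) ≤
      (21 / 16) ^ n * (8 / 5) ^ d * 2 ^ m := by
  have h0 : ∀ B, 0 ≤ shiftWeight d n B := fun B =>
    (by positivity : (0 : ℝ) ≤ _).trans (half_pow_card_le_shiftWeight le_rfl)
  have h : (((Finset.range n).powerset.filter
        (fun B => (B ∪ B.image (· + d)).card ≤ m)).card : ℝ) * (1 / 2) ^ m ≤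
      (21 / 16) ^ n * (8 / 5) ^ d := by
    calc _ = ∑ B ∈ (Finset.range n).powerset.filter
          (fun B => (B ∪ B.image (· + d)).card ≤ m), (1 / 2 : ℝ) ^ m := by simp
      _ ≤ ∑ B ∈ (Finset.range n).powerset.filter
          (fun B => (B ∪ B.image (· + d)).card ≤ m), shiftWeight d n B :=
        Finset.sum_le_sum fun B hB => half_pow_card_le_shiftWeight (Finset.mem_filter.1 hB).2
      _ ≤ ∑ B ∈ (Finset.range n).powerset, shiftWeight d n B :=
        Finset.sum_le_sum_of_subset_of_nonneg (Finset.filter_subset _ _) fun B _ _ => h0 B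
      _ ≤ _ := sum_shiftWeight_le hd n
  rwa [one_div, inv_pow, ← div_eq_mul_inv, div_le_iff₀ (by positivity)] at h

theorem Finset.card_union_shift_le_card_add {B C : Finset ℕ} {a d : ℕ} (ha : a ∈ C)
    (had : a + d ∈ C) : (B ∪ B.image (· + d)).card ≤ (B + C).card := by
  rw [← Finset.card_image_of_injective (B ∪ B.image (· + d)) (add_left_injective a)]
  refine Finset.card_le_card fun y hy => ?_
  simp only [Finset.mem_image, Finset.mem_union] at hy
  obtain ⟨x, hx | ⟨b, hb, rfl⟩, rfl⟩ := hy
  · exact Finset.add_mem_add hx ha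
  · have := Finset.add_mem_add hb had
    rwa [add_comm a, ← add_assoc] at this

/-- Pairs `B ⊆ {0, …, n - 1}`, `C ⊆ {0, …, t}` with `|C| ≥ 2` and `|B + C| ≤ m`. -/
def smallSumsetPairs (n t m : ℕ) : Finset (Finset ℕ × Finset ℕ) :=
  ((Finset.range n).powerset ×ˢ (Finset.range (t + 1)).powerset).filter
    (fun p => 2 ≤ p.2.card ∧ (p.1 + p.2).card ≤ m)

theorem card_smallSumsetPairs_le (n t m : ℕ) :
    ((smallSumsetPairs n t m).card : ℝ) ≤
      2 ^ (t + 1) * ((21 / 16) ^ n * (8 / 5) ^ t * 2 ^ m) := by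
  have hC : ∀ C ∈ (Finset.range (t + 1)).powerset,
      (((Finset.range n).powerset.filter (fun B => 2 ≤ C.card ∧ (B + C).card ≤ m)).card : ℝ) ≤
        (21 / 16) ^ n * (8 / 5) ^ t * 2 ^ m := by
    intro C hC
    rw [Finset.mem_powerset] at hC
    by_cases h2 : 2 ≤ C.card
    · obtain ⟨a, d, ha, had, hd⟩ : ∃ a d, a ∈ C ∧ a + d ∈ C ∧ 0 < d := by
        obtain ⟨x, hx, y, hy, hxy⟩ := Finset.one_lt_card.1 h2
        rcases hxy.lt_or_gt with h | h
        · exact ⟨x, y - x, hx, by rwa [Nat.add_sub_cancel' h.le], by omega⟩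
        · exact ⟨y, x - y, hy, by rwa [Nat.add_sub_cancel' h.le], by omega⟩
      have hdt : d ≤ t := by
        have := Finset.mem_range.1 (hC had)
        omega
      have hsub : (Finset.range n).powerset.filter (fun B => 2 ≤ C.card ∧ (B + C).card ≤ m) ⊆
          (Finset.range n).powerset.filter (fun B => (B ∪ B.image (· + d)).card ≤ m) :=
        Finset.monotone_filter_right _ fun B _ hB =>
          (Finset.card_union_shift_le_card_add ha had).trans hB.2
      calc _ ≤ (((Finset.range n).powerset.filter
            (fun B => (B ∪ B.image (· + d)).card ≤ m)).card : ℝ) := by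
            exact_mod_cast Finset.card_le_card hsub
        _ ≤ (21 / 16) ^ n * (8 / 5) ^ d * 2 ^ m := card_filter_card_union_shift_le hd n m
        _ ≤ _ := by
            gcongr
            norm_num
    · simp only [h2, false_and, Finset.filter_false, Finset.card_empty, Nat.cast_zero]
      positivity
  calc ((smallSumsetPairs n t m).card : ℝ)
      = ∑ C ∈ (Finset.range (t + 1)).powerset, (((Finset.range n).powerset.filter
          (fun B => 2 ≤ C.card ∧ (B + C).card ≤ m)).card : ℝ) := by
        simp only [smallSumsetPairs, Finset.card_filter, Finset.sum_product_right, Nat.cast_sum]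
    _ ≤ ∑ C ∈ (Finset.range (t + 1)).powerset, (21 / 16) ^ n * (8 / 5) ^ t * 2 ^ m :=
        Finset.sum_le_sum hC
    _ = _ := by simp

theorem card_filter_notMem_add_le {s t k x : ℕ} (hs : k ≤ s) (ht : k ≤ t) (hx : k ≤ x)
    (hxs : x + k ≤ s + t) :
    ((((Finset.range (s + 1)).powerset ×ˢ (Finset.range (t + 1)).powerset).filter
        (fun p => x ∉ p.1 + p.2)).card : ℝ) ≤ 2 ^ (s + 1) * 2 ^ (t + 1) * (3 / 4) ^ k := by
  have hJ : ∀ j ∈ Finset.Icc (x - t) (min s x), j ≤ s ∧ j ≤ x ∧ x - j ≤ t := by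
    intro j hj
    rw [Finset.mem_Icc] at hj
    omega
  have hsub : (((Finset.range (s + 1)).powerset ×ˢ (Finset.range (t + 1)).powerset).filter
        (fun p => x ∉ p.1 + p.2)) ⊆
      (((Finset.range (s + 1)).powerset ×ˢ (Finset.range (t + 1)).powerset).filter
        (fun p => ∀ j ∈ Finset.Icc (x - t) (min s x), j ∈ p.1 → x - j ∉ p.2)) := by
    refine Finset.monotone_filter_right _ fun p _ hp j hj hB hC => hp ?_
    have := Finset.add_mem_add hB hC
    rwa [Nat.add_sub_cancel' (hJ j hj).2.1] at this
  calc _ ≤ ((((Finset.range (s + 1)).powerset ×ˢ (Finset.range (t + 1)).powerset).filter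
        (fun p => ∀ j ∈ Finset.Icc (x - t) (min s x), j ∈ p.1 → x - j ∉ p.2)).card : ℝ) := by
        exact_mod_cast Finset.card_le_card hsub
    _ ≤ 2 ^ (Finset.range (s + 1)).card * 2 ^ (Finset.range (t + 1)).card *
          (3 / 4) ^ (Finset.Icc (x - t) (min s x)).card := by
        refine Finset.card_filter_pairs_avoiding_le (fun j hj => ?_) (fun i hi j hj h => ?_)
          (fun j hj => ?_)
        · have := hJ j hj
          simp only [Finset.mem_range]
          omega
        · have h1 := hJ i (by simpa using hi)
          have h2 := hJ j (by simpa using hj)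
          omega
        · have := hJ j hj
          simp only [Finset.mem_range]
          omega
    _ ≤ _ := by
        rw [Finset.card_range, Finset.card_range, Nat.card_Icc]
        gcongr ?_ * ?_
        exact pow_le_pow_of_le_one (by norm_num) (by norm_num) (by omega)

theorem card_smallSumsetPairs_le_of_le {s t k m : ℕ} (hs : k ≤ s) (ht : k ≤ t)
    (hm : m + 2 * k ≤ s + t) :
    ((smallSumsetPairs (s + 1) t m).card : ℝ) ≤
      (s + t + 1) * (2 ^ (s + 1) * 2 ^ (t + 1) * (3 / 4) ^ k) := by
  have hsub : smallSumsetPairs (s + 1) t m ⊆ (Finset.Icc k (s + t - k)).biUnion fun x =>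
      ((Finset.range (s + 1)).powerset ×ˢ (Finset.range (t + 1)).powerset).filter
        (fun p => x ∉ p.1 + p.2) := by
    intro p hp
    obtain ⟨hp, -, hpm⟩ := Finset.mem_filter.1 hp
    obtain ⟨x, hx, hxp⟩ : ∃ x ∈ Finset.Icc k (s + t - k), x ∉ p.1 + p.2 := by
      by_contra! h
      have := (Finset.card_le_card h).trans hpm
      rw [Nat.card_Icc] at this
      omega
    exact Finset.mem_biUnion.2 ⟨x, hx, Finset.mem_filter.2 ⟨hp, hxp⟩⟩
  calc ((smallSumsetPairs (s + 1) t m).card : ℝ)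
      ≤ ∑ x ∈ Finset.Icc k (s + t - k),
          ((((Finset.range (s + 1)).powerset ×ˢ (Finset.range (t + 1)).powerset).filter
            (fun p => x ∉ p.1 + p.2)).card : ℝ) := by
        exact_mod_cast (Finset.card_le_card hsub).trans Finset.card_biUnion_le
    _ ≤ ∑ x ∈ Finset.Icc k (s + t - k), 2 ^ (s + 1) * 2 ^ (t + 1) * (3 / 4) ^ k := by
        refine Finset.sum_le_sum fun x hx => ?_
        rw [Finset.mem_Icc] at hx
        exact card_filter_notMem_add_le hs ht hx.1 (by omega)
    _ ≤ _ := by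
        rw [Finset.sum_const, nsmul_eq_mul, Nat.card_Icc]
        gcongr
        exact_mod_cast (by omega : s + t - k + 1 - k ≤ s + t + 1)

/-- The sets `A ⊆ {0, …, N}` with a decomposition `A = B + C`, `|B|, |C| ≥ 2`. -/
def decomposableSets (N : ℕ) : Set (Finset ℕ) :=
  {A | A ⊆ Finset.range (N + 1) ∧
    ∃ B C : Finset ℕ, B ⊆ Finset.range (N + 1) ∧ C ⊆ Finset.range (N + 1) ∧
      2 ≤ B.card ∧ 2 ≤ C.card ∧ A = B + C}

theorem decomposableSets_subset (N m : ℕ) :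
    decomposableSets N ⊆
      ↑((Finset.range (N + 1)).powerset.filter (fun A => m < A.card) ∪
        (Finset.range (N / 2 + 1)).biUnion fun t =>
          (smallSumsetPairs (N - t + 1) t m).image fun p => p.1 + p.2) := by
  rintro A ⟨hA, B, C, -, -, hB, hC, rfl⟩
  rw [Finset.mem_coe, Finset.mem_union]
  by_cases hm : m < (B + C).card
  · exact Or.inl (Finset.mem_filter.2 ⟨Finset.mem_powerset.2 hA, hm⟩)
  right
  wlog h : C.sup id ≤ B.sup id generalizing B C
  · exact add_comm C B ▸ this C B hC hB (add_comm B C ▸ hA) (add_comm B C ▸ hm) (by omega)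
  have hmax : ∀ D : Finset ℕ, 2 ≤ D.card → D.sup id ∈ D := fun D hD => by
    obtain ⟨x, hx, h⟩ := Finset.exists_mem_eq_sup D (Finset.card_pos.1 (by omega)) id
    exact h ▸ hx
  have hst : B.sup id + C.sup id < N + 1 :=
    Finset.mem_range.1 (hA (Finset.add_mem_add (hmax B hB) (hmax C hC)))
  refine Finset.mem_biUnion.2 ⟨C.sup id, Finset.mem_range.2 (by omega),
    Finset.mem_image.2 ⟨(B, C), ?_, rfl⟩⟩
  simp only [smallSumsetPairs, Finset.mem_filter, Finset.mem_product, Finset.mem_powerset]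
  refine ⟨⟨fun b hb => ?_, fun c hc => ?_⟩, hC, not_lt.1 hm⟩
  · have : b ≤ B.sup id := Finset.le_sup (f := id) hb
    exact Finset.mem_range.2 (by omega)
  · have : c ≤ C.sup id := Finset.le_sup (f := id) hc
    exact Finset.mem_range.2 (by omega)

theorem ncard_decomposableSets_le (N m : ℕ) :
    ((decomposableSets N).ncard : ℝ) ≤
      (((Finset.range (N + 1)).powerset.filter (fun A => m < A.card)).card : ℝ) +
        ∑ t ∈ Finset.range (N / 2 + 1), ((smallSumsetPairs (N - t + 1) t m).card : ℝ) := by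
  have h := Set.ncard_le_ncard (decomposableSets_subset N m) (Finset.finite_toSet _)
  rw [Set.ncard_coe_finset] at h
  exact_mod_cast h.trans ((Finset.card_union_le _ _).trans (Nat.add_le_add_left
    (Finset.card_biUnion_le.trans (Finset.sum_le_sum fun t _ => Finset.card_image_le)) _))

theorem log_three_le : Real.log 3 ≤ 8 / 5 * Real.log 2 - 1 / 100 := by
  have h := Real.log_le_sub_one_of_pos (show (0 : ℝ) < 3 ^ 5 / 2 ^ 8 by norm_num)
  rw [Real.log_div (by norm_num) (by norm_num), Real.log_pow, Real.log_pow] at h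
  norm_num at h
  linarith

theorem log_twentyone_sixteenths_le : Real.log (21 / 16) ≤ 2 / 5 * Real.log 2 - 1 / 200 := by
  have h := Real.log_le_sub_one_of_pos (show (0 : ℝ) < (21 / 16) ^ 5 / 2 ^ 2 by norm_num)
  rw [Real.log_div (by norm_num) (by norm_num), Real.log_pow, Real.log_pow] at h
  norm_num at h
  linarith

theorem pow_eq_exp_mul_log {x : ℝ} (hx : 0 < x) (n : ℕ) : x ^ n = Real.exp (n * Real.log x) := by
  rw [Real.exp_nat_mul, Real.exp_log hx]

theorem card_filter_three_fifths_lt_card_le (N : ℕ) :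
    (((Finset.range (N + 1)).powerset.filter (fun A => 3 * N / 5 < A.card)).card : ℝ) ≤
      3 * (2 ^ N * Real.exp (-N / 5000)) := by
  have h := Finset.card_filter_lt_card_le (N + 1) (3 * N / 5)
  have hm : (3 * N / 5 : ℝ) ≤ ((3 * N / 5 + 1 : ℕ) : ℝ) := by
    have : 3 * N ≤ 5 * (3 * N / 5 + 1) := by omega
    have : (3 * N : ℝ) ≤ 5 * ((3 * N / 5 + 1 : ℕ) : ℝ) := by exact_mod_cast this
    linarith
  have hkey : (3 : ℝ) ^ N ≤ 2 ^ N * Real.exp (-N / 5000) * 2 ^ (3 * N / 5 + 1) := by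
    rw [pow_eq_exp_mul_log three_pos, pow_eq_exp_mul_log two_pos, pow_eq_exp_mul_log two_pos,
      ← Real.exp_add, ← Real.exp_add, Real.exp_le_exp]
    have h1 := mul_le_mul_of_nonneg_left log_three_le (Nat.cast_nonneg (α := ℝ) N)
    have h2 := mul_le_mul_of_nonneg_right hm (Real.log_nonneg one_le_two)
    have : (0 : ℝ) ≤ N := Nat.cast_nonneg N
    linarith
  rw [pow_succ (3 : ℝ)] at h
  refine le_of_mul_le_mul_right (h.trans ?_) (show (0 : ℝ) < 2 ^ (3 * N / 5 + 1) by positivity)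
  linarith

theorem card_smallSumsetPairs_le_of_lt {N t : ℕ} (ht : t < N / 1000) :
    ((smallSumsetPairs (N - t + 1) t (3 * N / 5)).card : ℝ) ≤
      8 * (2 ^ N * Real.exp (-N / 5000)) := by
  have htN : (t : ℝ) ≤ N / 1000 := by
    rw [le_div_iff₀ (by norm_num)]
    exact_mod_cast (by omega : t * 1000 ≤ N)
  have hm : ((3 * N / 5 : ℕ) : ℝ) ≤ 3 * N / 5 := by
    rw [le_div_iff₀ (by norm_num)]
    exact_mod_cast (by omega : 3 * N / 5 * 5 ≤ 3 * N)
  have hkey : (2 : ℝ) ^ t * ((21 / 16) ^ N * 2 ^ t * 2 ^ (3 * N / 5)) ≤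
      2 ^ N * Real.exp (-N / 5000) := by
    rw [pow_eq_exp_mul_log two_pos, pow_eq_exp_mul_log two_pos, pow_eq_exp_mul_log two_pos,
      pow_eq_exp_mul_log (by norm_num : (0 : ℝ) < 21 / 16),
      ← Real.exp_add, ← Real.exp_add, ← Real.exp_add, ← Real.exp_add, Real.exp_le_exp]
    have hN : (0 : ℝ) ≤ N := Nat.cast_nonneg N
    have h1 := mul_le_mul_of_nonneg_left log_twentyone_sixteenths_le hN
    have h2 := mul_le_mul_of_nonneg_right hm (Real.log_nonneg one_le_two)
    have h3 := mul_le_mul_of_nonneg_right htN (Real.log_nonneg one_le_two)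
    have h4 := mul_le_mul_of_nonneg_left (Real.log_two_lt_d9.le.trans
      (by norm_num : (0.6931471808 : ℝ) ≤ 1)) hN
    linarith
  calc _ ≤ (2 : ℝ) ^ (t + 1) * ((21 / 16) ^ (N - t + 1) * (8 / 5) ^ t * 2 ^ (3 * N / 5)) :=
        card_smallSumsetPairs_le _ _ _
    _ ≤ 2 ^ (t + 1) * ((21 / 16) ^ (N + 1) * 2 ^ t * 2 ^ (3 * N / 5)) := by
        gcongr <;> norm_num
    _ = 21 / 8 * (2 ^ t * ((21 / 16) ^ N * 2 ^ t * 2 ^ (3 * N / 5))) := by ring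
    _ ≤ 8 * (2 ^ N * Real.exp (-N / 5000)) := by
        gcongr
        norm_num

theorem card_smallSumsetPairs_le_of_ge {N t : ℕ} (ht : N / 1000 ≤ t) (htN : t ≤ N / 2) :
    ((smallSumsetPairs (N - t + 1) t (3 * N / 5)).card : ℝ) ≤
      8 * (N + 1) * (2 ^ N * Real.exp (-N / 5000)) := by
  have h := card_smallSumsetPairs_le_of_le (s := N - t) (t := t) (k := N / 1000)
    (m := 3 * N / 5) (by omega) ht (by omega)
  have hst : ((N - t : ℕ) : ℝ) + t = N := by exact_mod_cast (by omega : N - t + t = N)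
  have hpow : (2 : ℝ) ^ (N - t + 1) * 2 ^ (t + 1) = 4 * 2 ^ N := by
    rw [← pow_add, show N - t + 1 + (t + 1) = N + 2 by omega]
    ring
  have hk : (N : ℝ) / 1000 ≤ ((N / 1000 : ℕ) : ℝ) + 1 := by
    rw [div_le_iff₀ (by norm_num)]
    exact_mod_cast (by omega : N ≤ (N / 1000 + 1) * 1000)
  have hexp : (3 / 4 : ℝ) ^ (N / 1000) ≤ 2 * Real.exp (-N / 5000) := by
    rw [pow_eq_exp_mul_log (by norm_num : (0 : ℝ) < 3 / 4)]
    rw [show 2 * Real.exp (-N / 5000 : ℝ) = Real.exp (Real.log 2 + -N / 5000) by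
      rw [Real.exp_add, Real.exp_log two_pos], Real.exp_le_exp]
    have h1 := mul_le_mul_of_nonneg_left
      (Real.log_le_sub_one_of_pos (show (0 : ℝ) < 3 / 4 by norm_num))
      (Nat.cast_nonneg (α := ℝ) (N / 1000))
    have hN : (0 : ℝ) ≤ N := Nat.cast_nonneg N
    have := Real.log_two_gt_d9
    linarith
  rw [hst, hpow] at h
  calc _ ≤ ((N : ℝ) + 1) * (4 * 2 ^ N * (3 / 4) ^ (N / 1000)) := h
    _ ≤ (N + 1) * (4 * 2 ^ N * (2 * Real.exp (-N / 5000))) := by gcongr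
    _ = _ := by ring

theorem ncard_decomposableSets_le_exp (N : ℕ) :
    ((decomposableSets N).ncard : ℝ) ≤ 11 * (N + 1) ^ 2 * (2 ^ N * Real.exp (-N / 5000)) := by
  have hN : (0 : ℝ) ≤ N := Nat.cast_nonneg N
  have hE : 0 < 2 ^ N * Real.exp (-N / 5000) := by positivity
  have hsum : ∀ t ∈ Finset.range (N / 2 + 1),
      ((smallSumsetPairs (N - t + 1) t (3 * N / 5)).card : ℝ) ≤
        8 * (N + 1) * (2 ^ N * Real.exp (-N / 5000)) := by
    intro t ht
    rcases lt_or_ge t (N / 1000) with h | h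
    · refine (card_smallSumsetPairs_le_of_lt h).trans ?_
      gcongr
      linarith
    · exact card_smallSumsetPairs_le_of_ge h (Nat.lt_succ_iff.1 (Finset.mem_range.1 ht))
  have hcount : ((N / 2 + 1 : ℕ) : ℝ) ≤ N + 1 := by
    exact_mod_cast (by omega : N / 2 + 1 ≤ N + 1)
  calc ((decomposableSets N).ncard : ℝ)
      ≤ 3 * (2 ^ N * Real.exp (-N / 5000)) +
          ∑ t ∈ Finset.range (N / 2 + 1), 8 * (N + 1) * (2 ^ N * Real.exp (-N / 5000)) :=
        (ncard_decomposableSets_le N (3 * N / 5)).trans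
          (add_le_add (card_filter_three_fifths_lt_card_le N) (Finset.sum_le_sum hsum))
    _ ≤ 3 * (N + 1) ^ 2 * (2 ^ N * Real.exp (-N / 5000)) +
          (N + 1) * (8 * (N + 1) * (2 ^ N * Real.exp (-N / 5000))) := by
        rw [Finset.sum_const, nsmul_eq_mul, Finset.card_range]
        gcongr
        nlinarith
    _ = _ := by ring

/-- Almost no subset of `{0, …, N}` is a genuine sumset: the number of
`A ⊆ {0, …, N}` of the form `A = B + C` with `|B|, |C| ≥ 2` is at most
`K · 2^N · exp(-cN)` for absolute constants `c, K > 0`. -/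
theorem almost_no_genuine_sumsets :
    ∃ c : ℝ, 0 < c ∧ ∃ K : ℝ, 0 < K ∧ ∀ N : ℕ,
      ({A : Finset ℕ | A ⊆ Finset.range (N + 1) ∧
          ∃ B C : Finset ℕ, B ⊆ Finset.range (N + 1) ∧ C ⊆ Finset.range (N + 1) ∧
            2 ≤ B.card ∧ 2 ≤ C.card ∧ A = B + C}.ncard : ℝ) ≤
        K * 2 ^ N * Real.exp (-c * N) := by
  refine ⟨1 / 10000, by norm_num, 11 * 20000 ^ 2, by norm_num, fun N => ?_⟩
  have hlin : (N : ℝ) + 1 ≤ 20000 * Real.exp (N / 20000) := by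
    have h1 := Real.add_one_le_exp ((N : ℝ) / 20000)
    have h2 : (0 : ℝ) ≤ N := Nat.cast_nonneg N
    linarith
  calc _ ≤ 11 * ((N : ℝ) + 1) ^ 2 * (2 ^ N * Real.exp (-N / 5000)) :=
        ncard_decomposableSets_le_exp N
    _ ≤ 11 * (20000 * Real.exp (N / 20000)) ^ 2 * (2 ^ N * Real.exp (-N / 5000)) := by
        gcongr
    _ = 11 * 20000 ^ 2 * 2 ^ N *
          (Real.exp (N / 20000) * Real.exp (N / 20000) * Real.exp (-N / 5000)) := by ring
    _ = _ := by
        rw [← Real.exp_add, ← Real.exp_add]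
        ring_nf
end

section
/- Let S be a numerical monoid. Then almost all elements of the restricted power monoid P_fin,0(S) are atoms: writing a(x) for the number of atoms A of P_fin,0(S) with max(A) ≤ x and t(x) for the number of elements A of P_fin,0(S) with max(A) ≤ x, the ratio a(x)/t(x) tends to 1 as x → ∞. -/
open Pointwise

/-- The restricted power monoid `P_fin,0(S)`: finite subsets of `S` containing `0`. -/
def Pfin0 (S : AddSubmonoid ℕ) : Set (Finset ℕ) :=
  {A | 0 ∈ A ∧ (A : Set ℕ) ⊆ (S : Set ℕ)}

/-- Atoms of `P_fin,0(S)`. -/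
def IsAtom0 (S : AddSubmonoid ℕ) (U : Finset ℕ) : Prop :=
  U ∈ Pfin0 S ∧ U ≠ {0} ∧
    ∀ B ∈ Pfin0 S, ∀ C ∈ Pfin0 S, U = B + C → B = {0} ∨ C = {0}

/-- The starting points `t ∈ A` of the pairs `{t, t + d}` contained in `U`. -/
def pairsIn (A : Finset ℕ) (d : ℕ) (U : Finset ℕ) : Finset ℕ :=
  A.filter (fun t => t ∈ U ∧ t + d ∈ U)

/-- The part of `[0, m)` lying in the blocks `[j * d, (j + 1) * d)` with `j ≡ i` modulo `2`. -/
def parityBlock (m d i : ℕ) : Finset ℕ :=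
  (Finset.range m).filter (fun t => t / d % 2 = i)

theorem sum_powerset_five_pow_card_pairsIn (d : ℕ) (A : Finset ℕ) :
    ∀ R : Finset ℕ, A ⊆ R → (∀ a ∈ A, a + d ∈ R) → (∀ a ∈ A, a + d ∉ A) →
      ∑ U ∈ R.powerset, 5 ^ (pairsIn A d U).card = 2 ^ (R.card + A.card) := by
  induction A using Finset.induction_on with
  | empty => intro R _ _ _; simp [pairsIn]
  | insert a A ha ih =>
    intro R h1 h2 h3
    have hdA := h3 a (Finset.mem_insert_self a A)
    have had : a ≠ a + d := fun h => hdA (by rw [← h]; exact Finset.mem_insert_self a A)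
    have haR : a ∈ R := h1 (Finset.mem_insert_self a A)
    have hadR : a + d ∈ R := h2 a (Finset.mem_insert_self a A)
    obtain ⟨R', hR', ha', hd'⟩ : ∃ R' : Finset ℕ, R = insert a (insert (a + d) R') ∧
        a ∉ insert (a + d) R' ∧ a + d ∉ R' := by
      refine ⟨(R.erase a).erase (a + d), ?_, ?_, ?_⟩
      · rw [Finset.insert_erase, Finset.insert_erase haR]
        exact Finset.mem_erase.2 ⟨had.symm, hadR⟩
      · simpa using had
      · simp
    have hx : ∀ x ∈ A, x ≠ a ∧ x ≠ a + d ∧ x + d ≠ a ∧ x + d ≠ a + d := by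
      intro x hx
      refine ⟨fun h => ha (h ▸ hx), fun h => hdA (h ▸ Finset.mem_insert_of_mem hx), fun h => ?_,
        fun h => ha ?_⟩
      · exact h3 x (Finset.mem_insert_of_mem hx) (h ▸ Finset.mem_insert_self a A)
      · have : x = a := by omega
        exact this ▸ hx
    have hA1 : A ⊆ R' := by
      intro x hxA
      have := h1 (Finset.mem_insert_of_mem hxA)
      rw [hR', Finset.mem_insert, Finset.mem_insert] at this
      have := hx x hxA
      tauto
    have hA2 : ∀ x ∈ A, x + d ∈ R' := by
      intro x hxA
      have := h2 x (Finset.mem_insert_of_mem hxA)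
      rw [hR', Finset.mem_insert, Finset.mem_insert] at this
      have := hx x hxA
      tauto
    have hA3 : ∀ x ∈ A, x + d ∉ A := fun x hxA h =>
      h3 x (Finset.mem_insert_of_mem hxA) (Finset.mem_insert_of_mem h)
    have key := ih R' hA1 hA2 hA3
    have haR' : a ∉ R' := fun h => ha' (Finset.mem_insert_of_mem h)
    subst hR'
    rw [Finset.sum_powerset_insert ha', Finset.sum_powerset_insert hd',
      Finset.sum_powerset_insert hd', Finset.card_insert_of_notMem ha',
      Finset.card_insert_of_notMem hd', Finset.card_insert_of_notMem ha]
    have e (V W : Finset ℕ) (hVW : ∀ y, y ≠ a → y ≠ a + d → (y ∈ V ↔ y ∈ W)) :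
        pairsIn A d V = pairsIn A d W := by
      refine Finset.filter_congr fun x hxA => ?_
      have := hx x hxA
      rw [hVW x this.1 this.2.1, hVW (x + d) this.2.2.1 this.2.2.2]
    have s1 : ∀ U ∈ R'.powerset, (pairsIn (insert a A) d U).card = (pairsIn A d U).card := by
      intro U hU
      have : a ∉ U := fun h => haR' (Finset.mem_powerset.1 hU h)
      rw [pairsIn, Finset.filter_insert, if_neg (by tauto)]; rfl
    have s2 : ∀ U ∈ R'.powerset,
        (pairsIn (insert a A) d (insert (a + d) U)).card = (pairsIn A d U).card := by
      intro U hU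
      have : a ∉ U := fun h => haR' (Finset.mem_powerset.1 hU h)
      rw [pairsIn, Finset.filter_insert, if_neg (by
        simp only [Finset.mem_insert, this, had, or_self, false_and, not_false_eq_true])]
      exact congrArg _ (e _ _ fun y hy hy' => by simp [hy'])
    have s3 : ∀ U ∈ R'.powerset,
        (pairsIn (insert a A) d (insert a U)).card = (pairsIn A d U).card := by
      intro U hU
      have : a + d ∉ U := fun h => hd' (Finset.mem_powerset.1 hU h)
      rw [pairsIn, Finset.filter_insert, if_neg (by
        simp only [Finset.mem_insert, this, had.symm, or_self, and_false, not_false_eq_true])]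
      exact congrArg _ (e _ _ fun y hy hy' => by simp [hy])
    have s4 : ∀ U ∈ R'.powerset,
        (pairsIn (insert a A) d (insert a (insert (a + d) U))).card
          = (pairsIn A d U).card + 1 := by
      intro U hU
      rw [pairsIn, Finset.filter_insert, if_pos (by simp), Finset.card_insert_of_notMem]
      · exact congrArg (· + 1) (congrArg _ (e _ _ fun y hy hy' => by simp [hy, hy']))
      · simp [ha]
    rw [Finset.sum_congr rfl fun U hU => congrArg (5 ^ ·) (s1 U hU),
      Finset.sum_congr rfl fun U hU => congrArg (5 ^ ·) (s2 U hU),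
      Finset.sum_congr rfl fun U hU => congrArg (5 ^ ·) (s3 U hU),
      Finset.sum_congr rfl fun U hU => congrArg (5 ^ ·) (s4 U hU)]
    simp only [pow_succ]
    rw [← Finset.sum_mul, key]
    ring

theorem card_parityBlock_add (m d : ℕ) :
    (parityBlock m d 0).card + (parityBlock m d 1).card = m := by
  have h := Finset.card_filter_add_card_filter_not (s := Finset.range m) (fun t => t / d % 2 = 0)
  simp only [Nat.mod_two_not_eq_zero, Finset.card_range] at h
  exact h

theorem card_le_card_pairsIn_parityBlock_add {m d : ℕ} {U C : Finset ℕ}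
    (hm : ∀ c ∈ C, c < m) (hU : ∀ c ∈ C, c ∈ U ∧ c + d ∈ U) :
    C.card ≤ (pairsIn (parityBlock m d 0) d U).card + (pairsIn (parityBlock m d 1) d U).card := by
  refine (Finset.card_le_card fun c hc => ?_).trans (Finset.card_union_le _ _)
  have := hm c hc
  have := hU c hc
  simp only [pairsIn, parityBlock, Finset.mem_union, Finset.mem_filter, Finset.mem_range]
  have := Nat.mod_two_eq_zero_or_one (c / d)
  tauto

theorem mul_card_filter_pairsIn_parityBlock_le {n m d : ℕ} (i Q : ℕ) (hd : 0 < d)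
    (hmd : m + d ≤ n + 1) :
    Q * ((Finset.range (n + 1)).powerset.filter (fun U =>
      Q * 2 ^ (parityBlock m d i).card ≤ 5 ^ (pairsIn (parityBlock m d i) d U).card)).card
      ≤ 2 ^ (n + 1) := by
  set A := parityBlock m d i with hA
  have h := sum_powerset_five_pow_card_pairsIn d A (Finset.range (n + 1))
    (by intro x hx; simp only [hA, parityBlock, Finset.mem_filter, Finset.mem_range] at hx ⊢; omega)
    (by intro x hx; simp only [hA, parityBlock, Finset.mem_filter, Finset.mem_range] at hx ⊢; omega)
    (by
      intro x hx hx'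
      simp only [hA, parityBlock, Finset.mem_filter, Nat.add_div_right x hd] at hx hx'
      omega)
  set F := (Finset.range (n + 1)).powerset.filter
    (fun U => Q * 2 ^ A.card ≤ 5 ^ (pairsIn A d U).card) with hF
  have h1 : F.card * (Q * 2 ^ A.card) ≤ 2 ^ (n + 1 + A.card) := by
    rw [Finset.card_range] at h
    rw [← h, ← smul_eq_mul]
    refine (Finset.card_nsmul_le_sum F (fun U => 5 ^ (pairsIn A d U).card) _ fun U hU =>
      (Finset.mem_filter.1 hU).2).trans ?_
    exact Finset.sum_le_sum_of_subset (Finset.filter_subset _ _)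
  rw [pow_add] at h1
  have : 0 < 2 ^ A.card := by positivity
  nlinarith

/-- The subsets of `[0, n]` containing unexpectedly many pairs `{t, t + d}` for some `d > 0`. -/
def pairRichSets (n Q : ℕ) : Finset (Finset ℕ) :=
  (((Finset.range (n + 2) ×ˢ Finset.range (n + 2)) ×ˢ Finset.range 2).filter
    (fun p => 0 < p.1.2 ∧ p.1.1 + p.1.2 ≤ n + 1)).biUnion fun p =>
      (Finset.range (n + 1)).powerset.filter (fun U => Q * 2 ^ (parityBlock p.1.1 p.1.2 p.2).card
        ≤ 5 ^ (pairsIn (parityBlock p.1.1 p.1.2 p.2) p.1.2 U).card)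

theorem mul_card_pairRichSets_le (n Q : ℕ) :
    Q * (pairRichSets n Q).card ≤ 2 * (n + 2) ^ 2 * 2 ^ (n + 1) := by
  refine (Nat.mul_le_mul_left Q Finset.card_biUnion_le).trans ?_
  rw [Finset.mul_sum]
  refine (Finset.sum_le_card_nsmul _ _ (2 ^ (n + 1)) fun p hp => ?_).trans ?_
  · have := (Finset.mem_filter.1 hp).2
    exact mul_card_filter_pairsIn_parityBlock_le p.2 Q this.1 this.2
  · rw [smul_eq_mul]
    refine Nat.mul_le_mul_right _ ((Finset.card_filter_le _ _).trans (le_of_eq ?_))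
    simp only [Finset.card_product, Finset.card_range]
    ring

theorem five_pow_lt_of_notMem_pairRichSets {n Q m d i : ℕ} {U : Finset ℕ}
    (hU : U ⊆ Finset.range (n + 1)) (hQ : U ∉ pairRichSets n Q) (hd : 0 < d)
    (hmd : m + d ≤ n + 1) (hi : i < 2) :
    5 ^ (pairsIn (parityBlock m d i) d U).card < Q * 2 ^ (parityBlock m d i).card := by
  by_contra! h
  refine hQ (Finset.mem_biUnion.2 ⟨((m, d), i), ?_, ?_⟩)
  · simp only [Finset.mem_filter, Finset.mem_product, Finset.mem_range]
    omega
  · exact Finset.mem_filter.2 ⟨Finset.mem_powerset.2 hU, h⟩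

theorem five_pow_card_le_of_notMem_pairRichSets {n Q m d : ℕ} {U C : Finset ℕ}
    (hU : U ⊆ Finset.range (n + 1)) (hQ : U ∉ pairRichSets n Q) (hd : 0 < d)
    (hmd : m + d ≤ n + 1) (hm : ∀ c ∈ C, c < m) (hC : ∀ c ∈ C, c ∈ U ∧ c + d ∈ U) :
    5 ^ C.card ≤ Q ^ 2 * 2 ^ m := by
  have h0 := five_pow_lt_of_notMem_pairRichSets hU hQ hd hmd (i := 0) (by norm_num)
  have h1 := five_pow_lt_of_notMem_pairRichSets hU hQ hd hmd (i := 1) (by norm_num)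
  calc 5 ^ C.card ≤ 5 ^ ((pairsIn (parityBlock m d 0) d U).card +
        (pairsIn (parityBlock m d 1) d U).card) :=
        Nat.pow_le_pow_right (by norm_num) (card_le_card_pairsIn_parityBlock_add hm hC)
    _ ≤ (Q * 2 ^ (parityBlock m d 0).card) * (Q * 2 ^ (parityBlock m d 1).card) := by
        rw [pow_add]; exact Nat.mul_le_mul h0.le h1.le
    _ = Q ^ 2 * 2 ^ ((parityBlock m d 0).card + (parityBlock m d 1).card) := by ring
    _ = Q ^ 2 * 2 ^ m := by rw [card_parityBlock_add]

/-- Pairs `(B, C)` of subsets of `[0, b]` and `[0, n - b]` with few elements in total. -/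
def sparsePairs (n Q b : ℕ) : Finset (Finset ℕ × Finset ℕ) :=
  ((Finset.range (b + 1)).powerset ×ˢ (Finset.range (n - b + 1)).powerset).filter
    (fun p => 5 ^ (p.1.card + p.2.card) ≤ Q ^ 4 * 2 ^ (n + 2))

theorem sum_powerset_pow_card (s : Finset ℕ) (y : ℝ) :
    ∑ B ∈ s.powerset, y ^ B.card = (y + 1) ^ s.card := by
  simpa using Finset.sum_pow_mul_eq_add_pow y 1 s

theorem card_sparsePairs_le {n Q b : ℕ} (hQ : 0 < Q) (hb : b ≤ n) :
    ((sparsePairs n Q b).card : ℝ) ≤ Q * (1.995 : ℝ) ^ (n + 2) := by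
  have hQ1 : (1 : ℝ) ≤ Q := by exact_mod_cast hQ
  have hp : ∀ p ∈ sparsePairs n Q b,
      (1 : ℝ) ≤ (Q * 1.14 ^ (n + 2)) * (3 / 4 : ℝ) ^ (p.1.card + p.2.card) := by
    intro p hp
    have h := (Finset.mem_filter.1 hp).2
    set K := p.1.card + p.2.card
    have h' : (5 : ℝ) ^ K ≤ Q ^ 4 * 2 ^ (n + 2) := by exact_mod_cast h
    have h2 : ((4 / 3 : ℝ) ^ K) ^ 11 ≤ ((Q : ℝ) * 1.14 ^ (n + 2)) ^ 11 := by
      calc ((4 / 3 : ℝ) ^ K) ^ 11 = ((4 / 3 : ℝ) ^ 11) ^ K := by rw [← pow_mul, ← pow_mul, mul_comm]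
        _ ≤ ((5 : ℝ) ^ 2) ^ K := pow_le_pow_left₀ (by norm_num) (by norm_num) _
        _ = ((5 : ℝ) ^ K) ^ 2 := by rw [← pow_mul, ← pow_mul, mul_comm]
        _ ≤ ((Q : ℝ) ^ 4 * 2 ^ (n + 2)) ^ 2 := pow_le_pow_left₀ (by positivity) h' _
        _ = (Q : ℝ) ^ 8 * ((2 : ℝ) ^ 2) ^ (n + 2) := by
            rw [mul_pow, ← pow_mul, ← pow_mul, ← pow_mul, mul_comm (n + 2) 2]
        _ ≤ (Q : ℝ) ^ 11 * ((1.14 : ℝ) ^ 11) ^ (n + 2) :=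
            mul_le_mul (pow_le_pow_right₀ hQ1 (by norm_num))
              (pow_le_pow_left₀ (by norm_num) (by norm_num) _) (by positivity) (by positivity)
        _ = ((Q : ℝ) * 1.14 ^ (n + 2)) ^ 11 := by
            rw [mul_pow, ← pow_mul, ← pow_mul, mul_comm 11]
    have h3 : (4 / 3 : ℝ) ^ K ≤ (Q : ℝ) * 1.14 ^ (n + 2) :=
      le_of_pow_le_pow_left₀ (by norm_num) (by positivity) h2
    calc (1 : ℝ) = (4 / 3 : ℝ) ^ K * (3 / 4 : ℝ) ^ K := by rw [← mul_pow]; norm_num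
      _ ≤ _ := mul_le_mul_of_nonneg_right h3 (by positivity)
  have hsum : ∑ p ∈ (Finset.range (b + 1)).powerset ×ˢ (Finset.range (n - b + 1)).powerset,
      (3 / 4 : ℝ) ^ (p.1.card + p.2.card) = (7 / 4 : ℝ) ^ (n + 2) := by
    simp_rw [pow_add (3 / 4 : ℝ)]
    rw [Finset.sum_product]
    dsimp only
    rw [← Finset.sum_mul_sum, sum_powerset_pow_card, sum_powerset_pow_card, ← pow_add,
      Finset.card_range, Finset.card_range, show b + 1 + (n - b + 1) = n + 2 by omega]
    norm_num
  calc ((sparsePairs n Q b).card : ℝ) = ∑ p ∈ sparsePairs n Q b, (1 : ℝ) := by simp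
    _ ≤ ∑ p ∈ sparsePairs n Q b, (Q * 1.14 ^ (n + 2)) * (3 / 4 : ℝ) ^ (p.1.card + p.2.card) :=
        Finset.sum_le_sum hp
    _ ≤ ∑ p ∈ (Finset.range (b + 1)).powerset ×ˢ (Finset.range (n - b + 1)).powerset,
        (Q * 1.14 ^ (n + 2)) * (3 / 4 : ℝ) ^ (p.1.card + p.2.card) :=
        Finset.sum_le_sum_of_subset_of_nonneg (Finset.filter_subset _ _)
          fun _ _ _ => by positivity
    _ = Q * (1.14 ^ (n + 2) * (7 / 4 : ℝ) ^ (n + 2)) := by rw [← Finset.mul_sum, hsum, mul_assoc]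
    _ = Q * (1.995 : ℝ) ^ (n + 2) := by rw [← mul_pow]; norm_num

theorem exists_ne_zero_of_mem_Pfin0 {S : AddSubmonoid ℕ} {B : Finset ℕ} (hB : B ∈ Pfin0 S)
    (hB0 : B ≠ {0}) : ∃ d ∈ B, 0 < d := by
  by_contra! h
  refine hB0 (Finset.eq_singleton_iff_unique_mem.2 ⟨hB.1, fun x hx => ?_⟩)
  have := h x hx
  omega

theorem exists_mem_sparsePairs_of_notMem_pairRichSets {S : AddSubmonoid ℕ} {n Q : ℕ}
    {B C : Finset ℕ}
    (hB : B ∈ Pfin0 S) (hC : C ∈ Pfin0 S) (hB0 : B ≠ {0}) (hC0 : C ≠ {0})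
    (hn : B + C ⊆ Finset.range (n + 1)) (hrich : B + C ∉ pairRichSets n Q) :
    ∃ b ∈ Finset.range (n + 1), (B, C) ∈ sparsePairs n Q b := by
  obtain ⟨d, hdB, hd⟩ := exists_ne_zero_of_mem_Pfin0 hB hB0
  obtain ⟨e, heC, he⟩ := exists_ne_zero_of_mem_Pfin0 hC hC0
  have hsum : ∀ x ∈ B, ∀ y ∈ C, x + y < n + 1 := fun x hx y hy =>
    Finset.mem_range.1 (hn (Finset.add_mem_add hx hy))
  obtain ⟨b, hbB, hb⟩ := B.exists_max_image id ⟨0, hB.1⟩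
  simp only [id] at hb
  have hbn := hsum b hbB 0 hC.1
  have hCb : ∀ y ∈ C, y < n - b + 1 := fun y hy => by have := hsum b hbB y hy; omega
  have hdb := hb d hdB
  have heb := hsum b hbB e heC
  have h1 : 5 ^ C.card ≤ Q ^ 2 * 2 ^ (n - b + 1) :=
    five_pow_card_le_of_notMem_pairRichSets hn hrich hd (by omega) hCb fun c hc =>
      ⟨by simpa using Finset.add_mem_add hB.1 hc, by
        simpa [add_comm] using Finset.add_mem_add hdB hc⟩
  have h2 : 5 ^ B.card ≤ Q ^ 2 * 2 ^ (b + 1) :=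
    five_pow_card_le_of_notMem_pairRichSets hn hrich he (by omega)
      (fun x hx => by have := hb x hx; omega) fun x hx =>
      ⟨by simpa using Finset.add_mem_add hx hC.1, Finset.add_mem_add hx heC⟩
  refine ⟨b, Finset.mem_range.2 hbn, Finset.mem_filter.2 ⟨?_, ?_⟩⟩
  · rw [Finset.mem_product, Finset.mem_powerset, Finset.mem_powerset]
    exact ⟨fun x hx => Finset.mem_range.2 (by have := hb x hx; omega),
      fun y hy => Finset.mem_range.2 (hCb y hy)⟩
  · have h3 : n + 2 = (b + 1) + (n - b + 1) := by omega
    rw [h3, pow_add, pow_add]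
    calc _ ≤ _ := Nat.mul_le_mul h2 h1
      _ = _ := by ring

theorem subset_range_of_sup_le {A : Finset ℕ} {n : ℕ} (h : A.sup id ≤ n) :
    A ⊆ Finset.range (n + 1) := fun _ hx =>
  Finset.mem_range.2 (Nat.lt_succ_of_le ((Finset.le_sup (f := id) hx).trans h))

theorem finite_setOf_mem_Pfin0_sup_le (S : AddSubmonoid ℕ) (n : ℕ) :
    {A : Finset ℕ | A ∈ Pfin0 S ∧ A.sup id ≤ n}.Finite :=
  (Finset.finite_toSet (Finset.range (n + 1)).powerset).subset fun _ hA =>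
    Finset.mem_coe.2 (Finset.mem_powerset.2 (subset_range_of_sup_le hA.2))

theorem ncard_not_isAtom0_le (S : AddSubmonoid ℕ) (n : ℕ) {Q : ℕ} (hQ : 0 < Q) :
    ({A : Finset ℕ | (A ∈ Pfin0 S ∧ ¬ IsAtom0 S A) ∧ A.sup id ≤ n}.ncard : ℝ) ≤
      1 + 2 * (n + 2) ^ 2 * 2 ^ (n + 1) / Q + (n + 1) * (Q * (1.995 : ℝ) ^ (n + 2)) := by
  set T : Finset (Finset ℕ) := ({{0}} ∪ pairRichSets n Q) ∪
    (Finset.range (n + 1)).biUnion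
      fun b => (sparsePairs n Q b).image fun p => p.1 + p.2 with hT
  have hsub : {A : Finset ℕ | (A ∈ Pfin0 S ∧ ¬ IsAtom0 S A) ∧ A.sup id ≤ n} ⊆ (T : Set _) := by
    rintro A ⟨⟨hA, hna⟩, hn⟩
    rw [Finset.mem_coe, hT, Finset.mem_union, Finset.mem_union, Finset.mem_singleton,
      Finset.mem_biUnion]
    by_cases h0 : A = {0}
    · exact Or.inl (Or.inl h0)
    by_cases hr : A ∈ pairRichSets n Q
    · exact Or.inl (Or.inr hr)
    right
    have : ¬ ∀ B ∈ Pfin0 S, ∀ C ∈ Pfin0 S, A = B + C → B = {0} ∨ C = {0} :=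
      fun h => hna ⟨hA, h0, h⟩
    push Not at this
    obtain ⟨B, hB, C, hC, rfl, hB0, hC0⟩ := this
    obtain ⟨b, hb, hbs⟩ := exists_mem_sparsePairs_of_notMem_pairRichSets hB hC hB0 hC0
      (subset_range_of_sup_le hn) hr
    exact ⟨b, hb, Finset.mem_image.2 ⟨(B, C), hbs, rfl⟩⟩
  have h1 : {A : Finset ℕ | (A ∈ Pfin0 S ∧ ¬ IsAtom0 S A) ∧ A.sup id ≤ n}.ncard ≤ T.card := by
    rw [← Set.ncard_coe_finset]
    exact Set.ncard_le_ncard hsub T.finite_toSet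
  have h2 : T.card ≤ (1 + (pairRichSets n Q).card) +
      ∑ b ∈ Finset.range (n + 1), (sparsePairs n Q b).card := by
    refine (Finset.card_union_le _ _).trans (Nat.add_le_add ?_ ?_)
    · exact (Finset.card_union_le _ _).trans (by simp)
    · exact Finset.card_biUnion_le.trans (Finset.sum_le_sum fun b _ => Finset.card_image_le)
  have h3 : ((pairRichSets n Q).card : ℝ) ≤ 2 * (n + 2) ^ 2 * 2 ^ (n + 1) / Q := by
    rw [le_div_iff₀ (by exact_mod_cast hQ), mul_comm]
    exact_mod_cast mul_card_pairRichSets_le n Q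
  have h4 : ∑ b ∈ Finset.range (n + 1), ((sparsePairs n Q b).card : ℝ) ≤
      (n + 1) * (Q * (1.995 : ℝ) ^ (n + 2)) := by
    refine (Finset.sum_le_card_nsmul _ _ (Q * (1.995 : ℝ) ^ (n + 2)) fun b hb =>
      card_sparsePairs_le hQ (Nat.lt_succ_iff.1 (Finset.mem_range.1 hb))).trans (le_of_eq ?_)
    simp
  have h5 : ({A : Finset ℕ | (A ∈ Pfin0 S ∧ ¬ IsAtom0 S A) ∧ A.sup id ≤ n}.ncard : ℝ) ≤
      (1 + (pairRichSets n Q).card) +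
        ∑ b ∈ Finset.range (n + 1), ((sparsePairs n Q b).card : ℝ) := by
    exact_mod_cast h1.trans h2
  linarith

theorem two_pow_le_ncard_Pfin0 (S : AddSubmonoid ℕ) (hfin : ((S : Set ℕ)ᶜ).Finite) (n : ℕ) :
    (2 : ℝ) ^ n ≤ 2 ^ hfin.toFinset.card *
      ({A : Finset ℕ | A ∈ Pfin0 S ∧ A.sup id ≤ n}.ncard : ℝ) := by
  set G := hfin.toFinset with hG
  set R := Finset.Icc 1 n \ G with hR
  have h0 : ∀ V ∈ R.powerset, 0 ∉ V := fun V hV h => by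
    have := Finset.mem_powerset.1 hV h
    simp [hR] at this
  have h1 : R.powerset.card ≤ {A : Finset ℕ | A ∈ Pfin0 S ∧ A.sup id ≤ n}.ncard := by
    rw [← Set.ncard_coe_finset]
    refine Set.ncard_le_ncard_of_injOn (insert 0) ?_ ?_ (finite_setOf_mem_Pfin0_sup_le S n)
    · intro V hV
      have hV' := Finset.mem_powerset.1 (Finset.mem_coe.1 hV)
      refine ⟨⟨Finset.mem_insert_self _ _, fun x hx => ?_⟩, Finset.sup_le fun x hx => ?_⟩
      · rcases Finset.mem_insert.1 (Finset.mem_coe.1 hx) with rfl | hx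
        · exact S.zero_mem
        · have := hV' hx
          simp only [hR, hG, Finset.mem_sdiff, Set.Finite.mem_toFinset, Set.mem_compl_iff,
            not_not] at this
          exact this.2
      · rcases Finset.mem_insert.1 hx with rfl | hx
        · exact Nat.zero_le n
        · exact (Finset.mem_Icc.1 (Finset.mem_sdiff.1 (hV' hx)).1).2
    · intro V hV W hW h
      rw [← Finset.erase_insert (h0 V hV), ← Finset.erase_insert (h0 W hW)]
      exact congrArg (Finset.erase · 0) h
  have h2 : n ≤ G.card + R.card := by
    have := Finset.le_card_sdiff G (Finset.Icc 1 n)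
    rw [Nat.card_Icc, ← hR] at this
    omega
  rw [Finset.card_powerset] at h1
  calc (2 : ℝ) ^ n ≤ 2 ^ (G.card + R.card) := pow_le_pow_right₀ (by norm_num) h2
    _ = 2 ^ G.card * ((2 ^ R.card : ℕ) : ℝ) := by push_cast; rw [pow_add]
    _ ≤ _ := mul_le_mul_of_nonneg_left (by exact_mod_cast h1) (by positivity)

theorem tendsto_exceptional_bound_div_two_pow :
    Filter.Tendsto (fun n : ℕ => (1 + 2 * ((n : ℝ) + 2) ^ 2 * 2 ^ (n + 1) / ((n + 2) ^ 3 : ℕ) +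
      (n + 1) * (((n + 2) ^ 3 : ℕ) * (1.995 : ℝ) ^ (n + 2))) / 2 ^ n) Filter.atTop (nhds 0) := by
  have h1 : Filter.Tendsto (fun n : ℕ => ((1 / 2 : ℝ)) ^ n) Filter.atTop (nhds 0) :=
    tendsto_pow_atTop_nhds_zero_of_lt_one (by norm_num) (by norm_num)
  have h2 : Filter.Tendsto (fun n : ℕ => 4 * (1 / ((n : ℝ) + 2))) Filter.atTop (nhds 0) := by
    rw [← mul_zero (4 : ℝ)]
    refine Filter.Tendsto.const_mul _ ?_
    have := (Filter.tendsto_add_atTop_iff_nat 2).2 (tendsto_one_div_atTop_nhds_zero_nat (𝕜 := ℝ))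
    simpa using this
  have h3 : Filter.Tendsto (fun n : ℕ => 4 * (((n + 2 : ℕ) : ℝ) ^ 4 * (1.995 / 2 : ℝ) ^ (n + 2)))
      Filter.atTop (nhds 0) := by
    rw [← mul_zero (4 : ℝ)]
    refine Filter.Tendsto.const_mul _ ?_
    exact (Filter.tendsto_add_atTop_iff_nat
      (f := fun n : ℕ => (n : ℝ) ^ 4 * (1.995 / 2 : ℝ) ^ n) 2).2
      (tendsto_pow_const_mul_const_pow_of_abs_lt_one 4 (by rw [abs_of_pos] <;> norm_num))
  have h := (h1.add h2).add h3
  simp only [add_zero] at h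
  refine squeeze_zero (fun n => by positivity) (fun n => ?_) h
  rw [add_div, add_div]
  refine add_le_add (add_le_add (le_of_eq ?_) (le_of_eq ?_)) ?_
  · rw [div_pow, one_pow]
  · push_cast
    field_simp
    ring
  · have : 4 * (((n + 2 : ℕ) : ℝ) ^ 4 * (1.995 / 2 : ℝ) ^ (n + 2)) =
        ((n : ℝ) + 2) * (((n : ℝ) + 2) ^ 3 * (1.995 : ℝ) ^ (n + 2)) / 2 ^ n := by
      rw [div_pow]
      push_cast
      field_simp
      ring
    rw [this]
    push_cast
    gcongr
    norm_num

/-- Almost all elements of the restricted power monoid of a numerical monoid are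
atoms: the proportion of atoms among elements `A` with `max A ≤ x` tends to `1`. -/
theorem density_of_atoms (S : AddSubmonoid ℕ) (hfin : ((S : Set ℕ)ᶜ).Finite) :
    Filter.Tendsto
      (fun x : ℕ =>
        (({A : Finset ℕ | IsAtom0 S A ∧ A.sup id ≤ x}.ncard : ℝ) /
          ({A : Finset ℕ | A ∈ Pfin0 S ∧ A.sup id ≤ x}.ncard : ℝ)))
      Filter.atTop (nhds 1) := by
  set a : ℕ → Set (Finset ℕ) := fun x => {A | IsAtom0 S A ∧ A.sup id ≤ x}
  set t : ℕ → Set (Finset ℕ) := fun x => {A | A ∈ Pfin0 S ∧ A.sup id ≤ x}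
  set r : ℕ → Set (Finset ℕ) := fun x => {A | (A ∈ Pfin0 S ∧ ¬ IsAtom0 S A) ∧ A.sup id ≤ x}
  have hsplit : ∀ x, ((a x).ncard : ℝ) = (t x).ncard - (r x).ncard := by
    intro x
    have hsub : a x ⊆ t x := fun A hA => ⟨hA.1.1, hA.2⟩
    have hdiff : t x \ a x = r x := by
      ext A
      simp only [t, a, r, Set.mem_sdiff, Set.mem_ofPred_eq]
      tauto
    have h := Set.ncard_sdiff_add_ncard_of_subset hsub (finite_setOf_mem_Pfin0_sup_le S x)
    rw [hdiff] at h
    rw [← h]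
    push_cast
    ring
  have hbig := two_pow_le_ncard_Pfin0 S hfin
  have hpos : ∀ x, (0 : ℝ) < (t x).ncard := fun x =>
    pos_of_mul_pos_right (lt_of_lt_of_le (by positivity) (hbig x)) (by positivity)
  have hlim : Filter.Tendsto (fun x => ((r x).ncard : ℝ) / (t x).ncard) Filter.atTop (nhds 0) := by
    have h := tendsto_exceptional_bound_div_two_pow.const_mul ((2 : ℝ) ^ hfin.toFinset.card)
    rw [mul_zero] at h
    refine squeeze_zero (fun x => by positivity) (fun x => ?_) h
    have hr := ncard_not_isAtom0_le S x (Q := (x + 2) ^ 3) (by positivity)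
    refine (div_le_div_of_nonneg_right hr (hpos x).le).trans ?_
    rw [← mul_div_assoc, div_le_div_iff₀ (hpos x) (by positivity)]
    refine (mul_le_mul_of_nonneg_left (hbig x) (by positivity)).trans (le_of_eq ?_)
    ring
  have h1 := hlim.const_sub 1
  rw [sub_zero] at h1
  refine h1.congr fun x => ?_
  rw [hsplit x, sub_div, div_self (hpos x).ne']
end
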